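/- arXiv:0707.0568 — 2 statements merged into one kernel-verified Lean document; each statement's English description precedes it below -/
import Mathlib

section
/- With the high-SINR rates R_q and strategy sets P_q°, for every vector λ = (λ_1,…,λ_Q) of positive weights, the modified game G̃(λ) with payoffs Φ̃_q(p) = R_q(p) + (1/λ_q)·Σ_{r≠q} λ_r·R_r(p) admits exactly one Nash equilibrium, and this equilibrium is the (unique) global maximizer of p ↦ Σ_{q=1}^Q λ_q·R_q(p) over P_1°×…×P_Q°. (Proposition 4, second part: under the low-interference/high-SNR rate model, the modified game has a unique Nash equilibrium, which is Pareto optimal.) -/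
/-!
Since `λ_q Φ̃_q = U := Σ_r λ_r R_r` for every `q`, the game has the potential `U`, and an
equilibrium is a profile that maximizes `U` in each block of variables separately. In the variables
`x = log p` the potential is concave, being affine minus log-sum-exp functions, and the strategy
sets stay convex (a geometric mean lies below the arithmetic one); hence a blockwise maximizer is a
global one.

Two distinct maximizers cannot exist. If they differ in a power that interferes with some other
user, log-sum-exp is strictly convex between them and their geometric mean has a larger sum rate.
Otherwise all interferences agree, and strict concavity of `log` makes their arithmetic mean better.

A maximizer exists because `exp U` extends continuously to the compact set of profiles with
nonnegative powers and vanishes there as soon as a power does.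
-/

open scoped ENNReal

namespace HighSinr

/-- Strategy set `P_q°` with strictly positive powers, spectral-mask limits in `(0,∞]`,
and average power at most `1`. -/
def stratSet (N : ℕ) (pmax : Fin N → ℝ≥0∞) : Set (Fin N → ℝ) :=
  { p | (∀ k, 0 < p k ∧ ENNReal.ofReal (p k) ≤ pmax k) ∧
        (1 / (N : ℝ)) * ∑ k, p k ≤ 1 }

variable {Q N : ℕ}

/-- High-SINR (low-interference) rate of user `q`:
`R_q(p) = (1/N) Σ_k log(G_qq(k) p_q(k) / (1 + Σ_{r≠q} G_rq(k) p_r(k)))`. -/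
noncomputable def rate (Gc : Fin Q → Fin Q → Fin N → ℝ) (q : Fin Q)
    (p : Fin Q → Fin N → ℝ) : ℝ :=
  (1 / (N : ℝ)) * ∑ k, Real.log (Gc q q k * p q k /
    (1 + ∑ r ∈ Finset.univ.erase q, Gc r q k * p r k))

end HighSinr

namespace HighSinr

variable {Q N : ℕ}

/-- Payoff `Φ̃_q` of user `q` in the modified game `G̃(λ)` built on the high-SINR rates. -/
noncomputable def modPayoff (Gc : Fin Q → Fin Q → Fin N → ℝ) (lam : Fin Q → ℝ)
    (q : Fin Q) (p : Fin Q → Fin N → ℝ) : ℝ :=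
  rate Gc q p + (1 / lam q) * ∑ r ∈ Finset.univ.erase q, lam r * rate Gc r p

/-- `p` is a Nash equilibrium of the modified game `G̃(λ)` (high-SINR rates). -/
def isModNE (Gc : Fin Q → Fin Q → Fin N → ℝ) (pmax : Fin Q → Fin N → ℝ≥0∞)
    (lam : Fin Q → ℝ) (p : Fin Q → Fin N → ℝ) : Prop :=
  (∀ q, p q ∈ stratSet N (pmax q)) ∧
  ∀ q, ∀ pq ∈ stratSet N (pmax q),
    modPayoff Gc lam q (Function.update p q pq) ≤ modPayoff Gc lam q p

end HighSinr

namespace HighSinr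

theorem concaveOn_sum {ι E : Type*} [AddCommGroup E] [Module ℝ E] {s : Set E} (hs : Convex ℝ s)
    (t : Finset ι) {f : ι → E → ℝ} (hf : ∀ i ∈ t, ConcaveOn ℝ s (f i)) :
    ConcaveOn ℝ s fun x => ∑ i ∈ t, f i x := by
  simpa only [Finset.sum_fn] using
    Finset.sum_induction f (ConcaveOn ℝ s) (fun _ _ => ConcaveOn.add) (concaveOn_const 0 hs) hf

theorem concaveOn_le_add_of_hasFDerivAt {E : Type*} [NormedAddCommGroup E] [NormedSpace ℝ E]
    {s : Set E} {f : E → ℝ} {f' : E →L[ℝ] ℝ} {x y : E} (hf : ConcaveOn ℝ s f)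
    (hf' : HasFDerivAt f f' x) (hx : x ∈ s) (hy : y ∈ s) : f y ≤ f x + f' (y - x) := by
  let line : ℝ →ᵃ[ℝ] E := AffineMap.lineMap x y
  have h0 : line 0 = x := AffineMap.lineMap_apply_zero x y
  have h1 : line 1 = y := AffineMap.lineMap_apply_one x y
  have hderiv : HasDerivAt (f ∘ line) (f' (y - x)) 0 :=
    (h0.symm ▸ hf').comp_hasDerivAt 0 AffineMap.hasDerivAt_lineMap
  have hslope : slope (f ∘ line) 0 1 ≤ f' (y - x) :=
    (hf.comp_affineMap line).slope_le_of_hasDerivAt (x := 0) (y := 1)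
      (by rwa [Set.mem_preimage, h0]) (by rwa [Set.mem_preimage, h1]) one_pos hderiv
  rw [slope_def_field, Function.comp_apply, Function.comp_apply, h0, h1, sub_zero, div_one]
    at hslope
  linarith

theorem isMaxOn_univ_pi_of_isMaxOn_update {ι : Type*} [Finite ι] [DecidableEq ι] {E : ι → Type*}
    [∀ i, NormedAddCommGroup (E i)] [∀ i, NormedSpace ℝ (E i)] {S : ∀ i, Set (E i)}
    {f : (∀ i, E i) → ℝ} {x : ∀ i, E i} (hf : ConcaveOn ℝ (Set.univ.pi S) f)
    (hd : DifferentiableAt ℝ f x) (hx : x ∈ Set.univ.pi S)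
    (hmax : ∀ i, IsMaxOn (fun z => f (Function.update x i z)) (S i) (x i)) :
    IsMaxOn f (Set.univ.pi S) x := by
  cases nonempty_fintype ι
  have hS (i : ι) : Convex ℝ (S i) :=
    Set.eval_image_univ_pi ⟨x, hx⟩ ▸ hf.1.linear_image (LinearMap.proj i)
  intro y hy
  have hblock (i : ι) : fderiv ℝ f x (Pi.single i (y i - x i)) ≤ 0 := by
    have hf' : HasFDerivAt f (fderiv ℝ f x) (Function.update x i (x i)) := by
      rw [Function.update_eq_self]
      exact hd.hasFDerivAt
    have hderiv := hf'.comp (x i) (hasFDerivAt_update x (x i))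
    have hnonpos := (hmax i).localize.hasFDerivWithinAt_nonpos hderiv.hasFDerivWithinAt
      (sub_mem_posTangentConeAt_of_segment_subset
        ((hS i).segment_subset (hx i trivial) (hy i trivial)))
    have hsingle : ContinuousLinearMap.pi (Pi.single i (.id ℝ (E i))) (y i - x i) =
        Pi.single i (y i - x i) :=
      funext fun j => by obtain rfl | hj := eq_or_ne j i <;> simp [*]
    rwa [ContinuousLinearMap.comp_apply, hsingle] at hnonpos
  calc f y ≤ f x + fderiv ℝ f x (y - x) :=
        concaveOn_le_add_of_hasFDerivAt hf hd.hasFDerivAt hx hy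
    _ = f x + ∑ i, fderiv ℝ f x (Pi.single i (y i - x i)) := by
        rw [← map_sum, ← Finset.univ_sum_single (y - x)]; rfl
    _ ≤ f x := add_le_of_nonpos_right (Finset.sum_nonpos fun i _ => hblock i)

section LogSumExp

variable {ι : Type*} {s : Finset ι} {a x y : ι → ℝ} {c α β : ℝ}

theorem sum_mul_exp_lt (ha : ∀ i ∈ s, 0 ≤ a i) (hxy : ∃ i ∈ s, 0 < a i ∧ x i ≠ y i)
    (hα : 0 < α) (hβ : 0 < β) (hαβ : α + β = 1) :
    ∑ i ∈ s, a i * Real.exp (α * x i + β * y i) <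
      α * ∑ i ∈ s, a i * Real.exp (x i) + β * ∑ i ∈ s, a i * Real.exp (y i) := by
  calc ∑ i ∈ s, a i * Real.exp (α * x i + β * y i)
      < ∑ i ∈ s, a i * (α * Real.exp (x i) + β * Real.exp (y i)) := by
        obtain ⟨j, hj, haj, hxyj⟩ := hxy
        refine Finset.sum_lt_sum (fun i hi => mul_le_mul_of_nonneg_left
          (convexOn_exp.2 trivial trivial hα.le hβ.le hαβ) (ha i hi)) ⟨j, hj, ?_⟩
        exact mul_lt_mul_of_pos_left (strictConvexOn_exp.2 trivial trivial hxyj hα hβ hαβ) haj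
    _ = α * ∑ i ∈ s, a i * Real.exp (x i) + β * ∑ i ∈ s, a i * Real.exp (y i) := by
        simp only [mul_add, Finset.sum_add_distrib, Finset.mul_sum, mul_left_comm]

theorem sum_mul_exp_sub (t : ℝ) :
    ∑ i ∈ s, a i * Real.exp (x i - t) = (∑ i ∈ s, a i * Real.exp (x i)) * Real.exp (-t) := by
  simp only [sub_eq_add_neg, Real.exp_add, Finset.sum_mul, mul_assoc]

theorem log_sum_mul_exp_lt (ha : ∀ i ∈ s, 0 ≤ a i)
    (hxy : ∃ i ∈ s, ∃ j ∈ s, 0 < a i ∧ 0 < a j ∧ x i - y i ≠ x j - y j)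
    (hα : 0 < α) (hβ : 0 < β) (hαβ : α + β = 1) :
    Real.log (∑ i ∈ s, a i * Real.exp (α * x i + β * y i)) <
      α * Real.log (∑ i ∈ s, a i * Real.exp (x i)) +
        β * Real.log (∑ i ∈ s, a i * Real.exp (y i)) := by
  obtain ⟨i, hi, j, hj, hai, haj, hij⟩ := hxy
  have hpos (z : ι → ℝ) : 0 < ∑ i ∈ s, a i * Real.exp (z i) :=
    Finset.sum_pos' (fun i hi => mul_nonneg (ha i hi) (Real.exp_pos _).le)
      ⟨i, hi, mul_pos hai (Real.exp_pos _)⟩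
  -- Shifting `x` and `y` so that both exponential sums become `1` reduces the claim to the strict
  -- convexity of the exponential sum itself.
  have hnorm (z : ι → ℝ) :
      ∑ i ∈ s, a i * Real.exp (z i - Real.log (∑ i ∈ s, a i * Real.exp (z i))) = 1 := by
    rw [sum_mul_exp_sub, Real.exp_neg, Real.exp_log (hpos z), mul_inv_cancel₀ (hpos z).ne']
  set t := Real.log (∑ i ∈ s, a i * Real.exp (x i))
  set u := Real.log (∑ i ∈ s, a i * Real.exp (y i))
  have hne : ∃ i ∈ s, 0 < a i ∧ x i - t ≠ y i - u := by
    by_contra! h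
    exact hij (by linarith [h i hi hai, h j hj haj])
  rw [Real.log_lt_iff_lt_exp (hpos _), ← div_lt_one (Real.exp_pos _), div_eq_mul_inv,
    ← Real.exp_neg, ← sum_mul_exp_sub]
  calc ∑ i ∈ s, a i * Real.exp (α * x i + β * y i - (α * t + β * u))
      = ∑ i ∈ s, a i * Real.exp (α * (x i - t) + β * (y i - u)) :=
        Finset.sum_congr rfl fun i _ => by ring_nf
    _ < α * ∑ i ∈ s, a i * Real.exp (x i - t) + β * ∑ i ∈ s, a i * Real.exp (y i - u) :=
        sum_mul_exp_lt ha hne hα hβ hαβ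
    _ = 1 := by rw [hnorm, hnorm, mul_one, mul_one, hαβ]

theorem log_add_sum_mul_exp_lt (hc : 0 < c) (ha : ∀ i ∈ s, 0 ≤ a i)
    (hxy : ∃ i ∈ s, 0 < a i ∧ x i ≠ y i) (hα : 0 < α) (hβ : 0 < β) (hαβ : α + β = 1) :
    Real.log (c + ∑ i ∈ s, a i * Real.exp (α * x i + β * y i)) <
      α * Real.log (c + ∑ i ∈ s, a i * Real.exp (x i)) +
        β * Real.log (c + ∑ i ∈ s, a i * Real.exp (y i)) := by
  obtain ⟨j, hj, haj, hxyj⟩ := hxy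
  -- The constant `c` is one more term of the sum, with exponent `0` at both points.
  have h := log_sum_mul_exp_lt (s := s.insertNone) (a := fun o => o.elim c a)
    (x := fun o => o.elim 0 x) (y := fun o => o.elim 0 y)
    (by rintro (_ | i) hi; exacts [hc.le, ha i (Finset.some_mem_insertNone.1 hi)])
    ⟨some j, by simpa, none, by simp, by simpa, by simpa, by simpa [sub_eq_zero] using hxyj⟩
    hα hβ hαβ
  simpa using h

theorem convexOn_log_add_sum_mul_exp (hc : 0 < c) (ha : ∀ i ∈ s, 0 ≤ a i) :
    ConvexOn ℝ Set.univ fun x : ι → ℝ => Real.log (c + ∑ i ∈ s, a i * Real.exp (x i)) := by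
  refine convexOn_iff_forall_pos.2 ⟨convex_univ, fun x _ y _ α β hα hβ hαβ => ?_⟩
  by_cases hxy : ∃ i ∈ s, 0 < a i ∧ x i ≠ y i
  · exact (log_add_sum_mul_exp_lt hc ha hxy hα hβ hαβ).le
  · have hexp (i : ι) (hi : i ∈ s) : a i * Real.exp (y i) = a i * Real.exp (x i) ∧
        a i * Real.exp ((α • x + β • y) i) = a i * Real.exp (x i) := by
      obtain hai | hai := (ha i hi).eq_or_lt
      · simp only [← hai, zero_mul, and_self]
      · have hxi : x i = y i := by_contra fun h => hxy ⟨i, hi, hai, h⟩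
        simp only [Pi.add_apply, Pi.smul_apply, ← hxi, ← add_smul, hαβ, one_smul, and_self]
    simp only [Finset.sum_congr rfl fun i hi => (hexp i hi).1,
      Finset.sum_congr rfl fun i hi => (hexp i hi).2, ← add_smul, hαβ, one_smul, le_refl]

end LogSumExp

section StrategySet

variable {N : ℕ} {pm : Fin N → ℝ≥0∞}

theorem mem_stratSet_of_le {p m : Fin N → ℝ} (hp : p ∈ stratSet N pm) (hm : ∀ k, 0 < m k)
    (hmp : m ≤ p) : m ∈ stratSet N pm := by
  refine ⟨fun k => ⟨hm k, (ENNReal.ofReal_le_ofReal (hmp k)).trans (hp.1 k).2⟩, ?_⟩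
  have hsum : ∑ k, m k ≤ ∑ k, p k := Finset.sum_le_sum fun k _ => hmp k
  exact (mul_le_mul_of_nonneg_left hsum (by positivity)).trans hp.2

theorem convex_stratSet (pm : Fin N → ℝ≥0∞) : Convex ℝ (stratSet N pm) := by
  have hmask (k : Fin N) : Convex ℝ {v : ℝ | 0 < v ∧ ENNReal.ofReal v ≤ pm k} :=
    Set.OrdConnected.convex ⟨fun _ hu _ hw _ hv =>
      ⟨hu.1.trans_le hv.1, (ENNReal.ofReal_le_ofReal hv.2).trans hw.2⟩⟩
  have hpower : Convex ℝ {p : Fin N → ℝ | (1 / (N : ℝ)) * ∑ k, p k ≤ 1} :=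
    convex_halfSpace_le (f := fun p : Fin N → ℝ => (1 / (N : ℝ)) * ∑ k, p k)
      ⟨fun p p' => by simp [Finset.sum_add_distrib, mul_add],
        fun c p => by simp [← Finset.mul_sum, mul_left_comm]⟩ 1
  intro p hp p' hp' α β hα hβ hαβ
  exact ⟨fun k => hmask k (hp.1 k) (hp'.1 k) hα hβ hαβ, hpower hp.2 hp'.2 hα hβ hαβ⟩

theorem convex_setOf_exp_mem_stratSet (pm : Fin N → ℝ≥0∞) :
    Convex ℝ {x : Fin N → ℝ | (fun k => Real.exp (x k)) ∈ stratSet N pm} := by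
  intro x hx y hy α β hα hβ hαβ
  exact mem_stratSet_of_le (convex_stratSet pm hx hy hα hβ hαβ) (fun k => Real.exp_pos _)
    fun k => convexOn_exp.2 trivial trivial hα hβ hαβ

theorem stratSet_nonempty (hpm : ∀ k, 0 < pm k) : (stratSet N pm).Nonempty := by
  have hfin (k : Fin N) : min 1 (pm k) ≠ ∞ :=
    ne_top_of_le_ne_top ENNReal.one_ne_top (min_le_left _ _)
  refine ⟨fun k => (min 1 (pm k)).toReal, fun k => ⟨?_, ?_⟩, ?_⟩
  · exact ENNReal.toReal_pos (lt_min one_pos (hpm k)).ne' (hfin k)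
  · rw [ENNReal.ofReal_toReal (hfin k)]
    exact min_le_right _ _
  · have hle (k : Fin N) : (min 1 (pm k)).toReal ≤ 1 :=
      ENNReal.toReal_le_of_le_ofReal zero_le_one (by simp)
    have hsum : ∑ k, (min 1 (pm k)).toReal ≤ N := by
      simpa using Finset.sum_le_card_nsmul Finset.univ _ 1 fun k _ => hle k
    rw [one_div_mul_eq_div]
    exact div_le_one_of_le₀ hsum N.cast_nonneg

/-- The strategies of `P_q°` together with those in which some powers vanish: a compact set
containing `P_q°`, on which a maximizer can be sought. -/
def closedStratSet (N : ℕ) (pm : Fin N → ℝ≥0∞) : Set (Fin N → ℝ) :=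
  {p | (∀ k, 0 ≤ p k ∧ ENNReal.ofReal (p k) ≤ pm k) ∧ (1 / (N : ℝ)) * ∑ k, p k ≤ 1}

theorem stratSet_subset_closedStratSet : stratSet N pm ⊆ closedStratSet N pm :=
  fun _ hp => ⟨fun k => ⟨(hp.1 k).1.le, (hp.1 k).2⟩, hp.2⟩

theorem mem_stratSet_of_mem_closedStratSet {p : Fin N → ℝ} (hp : p ∈ closedStratSet N pm)
    (hpos : ∀ k, 0 < p k) : p ∈ stratSet N pm :=
  ⟨fun k => ⟨hpos k, (hp.1 k).2⟩, hp.2⟩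

theorem isClosed_closedStratSet : IsClosed (closedStratSet N pm) := by
  simp only [closedStratSet, Set.ofPred_and, Set.ofPred_forall]
  refine (isClosed_iInter fun k => (isClosed_le (by fun_prop) (by fun_prop)).inter ?_).inter
    (isClosed_le (by fun_prop) (by fun_prop))
  exact isClosed_le (ENNReal.continuous_ofReal.comp (continuous_apply k)) continuous_const

theorem isCompact_closedStratSet : IsCompact (closedStratSet N pm) := by
  refine (isCompact_Icc (a := (0 : Fin N → ℝ)) (b := fun _ => N)).of_isClosed_subset
    isClosed_closedStratSet fun p hp => ⟨fun k => (hp.1 k).1, fun k => ?_⟩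
  have hN : (0 : ℝ) < N := Nat.cast_pos.2 k.pos
  have hsum : ∑ k, p k ≤ N := by
    have := hp.2
    rwa [one_div_mul_eq_div, div_le_one hN] at this
  exact (Finset.single_le_sum (fun k _ => (hp.1 k).1) (Finset.mem_univ k)).trans hsum

end StrategySet

section SumRate

variable {Q N : ℕ} {Gc : Fin Q → Fin Q → Fin N → ℝ} {pmax : Fin Q → Fin N → ℝ≥0∞}
  {lam : Fin Q → ℝ}

/-- The set `P_1° × … × P_Q°` of admissible power profiles. -/
def profileSet (pmax : Fin Q → Fin N → ℝ≥0∞) : Set (Fin Q → Fin N → ℝ) :=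
  Set.univ.pi fun q => stratSet N (pmax q)

/-- The weighted sum rate `Σ_q λ_q R_q`, the potential of the modified game. -/
noncomputable def sumRate (Gc : Fin Q → Fin Q → Fin N → ℝ) (lam : Fin Q → ℝ)
    (p : Fin Q → Fin N → ℝ) : ℝ :=
  ∑ q, lam q * rate Gc q p

/-- Noise plus interference at user `q` on carrier `k`, the noise power being normalized to `1`. -/
noncomputable def interference (Gc : Fin Q → Fin Q → Fin N → ℝ) (q : Fin Q) (k : Fin N)
    (p : Fin Q → Fin N → ℝ) : ℝ :=
  1 + ∑ r ∈ Finset.univ.erase q, Gc r q k * p r k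

/-- Signal to interference-plus-noise ratio of user `q` on carrier `k`. -/
noncomputable def sinr (Gc : Fin Q → Fin Q → Fin N → ℝ) (q : Fin Q) (k : Fin N)
    (p : Fin Q → Fin N → ℝ) : ℝ :=
  Gc q q k * p q k / interference Gc q k p

/-- The power profile with logarithms `x`, a change of variables making the sum rate concave. -/
noncomputable def expProfile (x : Fin Q → Fin N → ℝ) : Fin Q → Fin N → ℝ :=
  fun q k => Real.exp (x q k)

theorem pos_of_mem_profileSet {p : Fin Q → Fin N → ℝ} (hp : p ∈ profileSet pmax) (q : Fin Q)
    (k : Fin N) : 0 < p q k :=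
  ((hp q trivial).1 k).1

theorem exists_expProfile_eq {p : Fin Q → Fin N → ℝ} (hp : ∀ q k, 0 < p q k) :
    ∃ x, expProfile x = p :=
  ⟨fun q k => Real.log (p q k), funext₂ fun q k => Real.exp_log (hp q k)⟩

theorem expProfile_update (x : Fin Q → Fin N → ℝ) (q : Fin Q) (z : Fin N → ℝ) :
    expProfile (Function.update x q z) =
      Function.update (expProfile x) q fun k => Real.exp (z k) :=
  funext fun r => Function.apply_update (fun _ w k => Real.exp (w k)) x q z r

theorem interference_pos (hcross : ∀ r q, r ≠ q → ∀ k, 0 ≤ Gc r q k) {p : Fin Q → Fin N → ℝ}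
    (hp : ∀ q k, 0 ≤ p q k) (q : Fin Q) (k : Fin N) : 0 < interference Gc q k p :=
  add_pos_of_pos_of_nonneg one_pos (Finset.sum_nonneg fun r hr =>
    mul_nonneg (hcross r q (Finset.ne_of_mem_erase hr) k) (hp r k))

theorem interference_add_smul (Gc : Fin Q → Fin Q → Fin N → ℝ) (q : Fin Q) (k : Fin N)
    (p p' : Fin Q → Fin N → ℝ) {α β : ℝ} (hαβ : α + β = 1) :
    interference Gc q k (α • p + β • p') =
      α * interference Gc q k p + β * interference Gc q k p' := by
  simp only [interference, Pi.add_apply, Pi.smul_apply, smul_eq_mul, mul_add,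
    Finset.sum_add_distrib, Finset.mul_sum, mul_left_comm]
  linarith

theorem sinr_pos (hdirect : ∀ q k, 0 < Gc q q k) (hcross : ∀ r q, r ≠ q → ∀ k, 0 ≤ Gc r q k)
    {p : Fin Q → Fin N → ℝ} (hp : ∀ q k, 0 < p q k) (q : Fin Q) (k : Fin N) :
    0 < sinr Gc q k p :=
  div_pos (mul_pos (hdirect q k) (hp q k)) (interference_pos hcross (fun r k => (hp r k).le) q k)

theorem log_sinr (hdirect : ∀ q k, 0 < Gc q q k) (hcross : ∀ r q, r ≠ q → ∀ k, 0 ≤ Gc r q k)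
    {p : Fin Q → Fin N → ℝ} (hp : ∀ q k, 0 < p q k) (q : Fin Q) (k : Fin N) :
    Real.log (sinr Gc q k p) =
      Real.log (Gc q q k) + Real.log (p q k) - Real.log (interference Gc q k p) := by
  rw [sinr, Real.log_div (mul_pos (hdirect q k) (hp q k)).ne'
    (interference_pos hcross (fun r k => (hp r k).le) q k).ne',
    Real.log_mul (hdirect q k).ne' (hp q k).ne']

theorem log_sinr_expProfile (hdirect : ∀ q k, 0 < Gc q q k)
    (hcross : ∀ r q, r ≠ q → ∀ k, 0 ≤ Gc r q k) (q : Fin Q) (k : Fin N)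
    (x : Fin Q → Fin N → ℝ) :
    Real.log (sinr Gc q k (expProfile x)) =
      Real.log (Gc q q k) + x q k - Real.log (interference Gc q k (expProfile x)) := by
  rw [log_sinr hdirect hcross (p := expProfile x) fun _ _ => Real.exp_pos _,
    show Real.log (expProfile x q k) = x q k from Real.log_exp _]

theorem sumRate_eq_sum_log_sinr (Gc : Fin Q → Fin Q → Fin N → ℝ) (lam : Fin Q → ℝ)
    (p : Fin Q → Fin N → ℝ) :
    sumRate Gc lam p =
      ∑ i : Fin Q × Fin N, lam i.1 / N * Real.log (sinr Gc i.1 i.2 p) := by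
  simp only [sumRate, rate, Fintype.sum_prod_type, ← Finset.mul_sum, ← mul_assoc, mul_one_div]
  rfl

theorem concaveOn_log_sinr_expProfile (hdirect : ∀ q k, 0 < Gc q q k)
    (hcross : ∀ r q, r ≠ q → ∀ k, 0 ≤ Gc r q k) (q : Fin Q) (k : Fin N) :
    ConcaveOn ℝ Set.univ fun x => Real.log (sinr Gc q k (expProfile x)) := by
  let carrier : (Fin Q → Fin N → ℝ) →ₗ[ℝ] Fin Q → ℝ := LinearMap.compLeft (LinearMap.proj k) _
  have hinterference :
      ConvexOn ℝ Set.univ fun x => Real.log (interference Gc q k (expProfile x)) :=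
    (convexOn_log_add_sum_mul_exp one_pos fun r hr =>
      hcross r q (Finset.ne_of_mem_erase hr) k).comp_linearMap carrier
  have hsignal : ConcaveOn ℝ Set.univ fun x : Fin Q → Fin N → ℝ => Real.log (Gc q q k) + x q k :=
    (concaveOn_const _ convex_univ).add
      ((LinearMap.proj k ∘ₗ LinearMap.proj q : (Fin Q → Fin N → ℝ) →ₗ[ℝ] ℝ).concaveOn convex_univ)
  simp only [log_sinr_expProfile hdirect hcross]
  exact hsignal.sub hinterference

theorem concaveOn_sumRate_expProfile (hdirect : ∀ q k, 0 < Gc q q k)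
    (hcross : ∀ r q, r ≠ q → ∀ k, 0 ≤ Gc r q k) (hlam : ∀ q, 0 ≤ lam q) :
    ConcaveOn ℝ Set.univ fun x => sumRate Gc lam (expProfile x) := by
  simp only [sumRate_eq_sum_log_sinr]
  exact concaveOn_sum convex_univ _ fun i _ =>
    (concaveOn_log_sinr_expProfile hdirect hcross i.1 i.2).smul
      (div_nonneg (hlam i.1) N.cast_nonneg)

theorem differentiable_sumRate_expProfile (hdirect : ∀ q k, 0 < Gc q q k)
    (hcross : ∀ r q, r ≠ q → ∀ k, 0 ≤ Gc r q k) (lam : Fin Q → ℝ) :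
    Differentiable ℝ fun x => sumRate Gc lam (expProfile x) := by
  simp only [sumRate_eq_sum_log_sinr, log_sinr_expProfile hdirect hcross]
  refine Differentiable.fun_sum fun i _ => Differentiable.const_mul (Differentiable.sub
    (by fun_prop) (Differentiable.log (by unfold interference expProfile; fun_prop) fun x => ?_)) _
  exact (interference_pos hcross (fun _ _ => (Real.exp_pos _).le) i.1 i.2).ne'

theorem convexComb_sumRate_lt (hlam : ∀ q, 0 < lam q) {p p' m : Fin Q → Fin N → ℝ} {α β : ℝ}
    (hle : ∀ q k, α * Real.log (sinr Gc q k p) + β * Real.log (sinr Gc q k p') ≤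
      Real.log (sinr Gc q k m))
    (hlt : ∃ q k, α * Real.log (sinr Gc q k p) + β * Real.log (sinr Gc q k p') <
      Real.log (sinr Gc q k m)) :
    α * sumRate Gc lam p + β * sumRate Gc lam p' < sumRate Gc lam m := by
  obtain ⟨q, k, hqk⟩ := hlt
  have hN : (0 : ℝ) < N := Nat.cast_pos.2 k.pos
  simp only [sumRate_eq_sum_log_sinr, Finset.mul_sum, mul_left_comm _ (lam _ / (N : ℝ)),
    ← Finset.sum_add_distrib, ← mul_add]
  exact Finset.sum_lt_sum
    (fun i _ => mul_le_mul_of_nonneg_left (hle i.1 i.2) (div_pos (hlam i.1) hN).le)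
    ⟨(q, k), Finset.mem_univ _, mul_lt_mul_of_pos_left hqk (div_pos (hlam q) hN)⟩

theorem sumRate_expProfile_lt_of_interferer_ne (hdirect : ∀ q k, 0 < Gc q q k)
    (hcross : ∀ r q, r ≠ q → ∀ k, 0 ≤ Gc r q k) (hlam : ∀ q, 0 < lam q)
    {x y : Fin Q → Fin N → ℝ} (hxy : ∃ r q k, r ≠ q ∧ 0 < Gc r q k ∧ x r k ≠ y r k)
    {α β : ℝ} (hα : 0 < α) (hβ : 0 < β) (hαβ : α + β = 1) :
    α * sumRate Gc lam (expProfile x) + β * sumRate Gc lam (expProfile y) <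
      sumRate Gc lam (expProfile (α • x + β • y)) := by
  obtain ⟨r, q, k, hrq, hG, hne⟩ := hxy
  refine convexComb_sumRate_lt hlam (fun q k =>
    (concaveOn_log_sinr_expProfile hdirect hcross q k).2 trivial trivial hα.le hβ.le hαβ)
    ⟨q, k, ?_⟩
  have hinterference : Real.log (interference Gc q k (expProfile (α • x + β • y))) <
      α * Real.log (interference Gc q k (expProfile x)) +
        β * Real.log (interference Gc q k (expProfile y)) :=
    log_add_sum_mul_exp_lt one_pos (fun r hr => hcross r q (Finset.ne_of_mem_erase hr) k)
      ⟨r, Finset.mem_erase.2 ⟨hrq, Finset.mem_univ r⟩, hG, hne⟩ hα hβ hαβ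
  simp only [log_sinr_expProfile hdirect hcross, Pi.add_apply, Pi.smul_apply, smul_eq_mul]
  linear_combination hinterference + Real.log (Gc q q k) * hαβ

theorem sumRate_lt_of_interference_eq (hdirect : ∀ q k, 0 < Gc q q k)
    (hcross : ∀ r q, r ≠ q → ∀ k, 0 ≤ Gc r q k) (hlam : ∀ q, 0 < lam q)
    {p p' : Fin Q → Fin N → ℝ} (hp : ∀ q k, 0 < p q k) (hp' : ∀ q k, 0 < p' q k) (hne : p ≠ p')
    (hI : ∀ q k, interference Gc q k p = interference Gc q k p')
    {α β : ℝ} (hα : 0 < α) (hβ : 0 < β) (hαβ : α + β = 1) :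
    α * sumRate Gc lam p + β * sumRate Gc lam p' < sumRate Gc lam (α • p + β • p') := by
  have hm (q : Fin Q) (k : Fin N) : 0 < (α • p + β • p') q k :=
    add_pos (mul_pos hα (hp q k)) (mul_pos hβ (hp' q k))
  have hIm (q : Fin Q) (k : Fin N) :
      interference Gc q k (α • p + β • p') = interference Gc q k p' := by
    rw [interference_add_smul Gc q k p p' hαβ, hI, ← add_mul, hαβ, one_mul]
  obtain ⟨q₀, hq₀⟩ := Function.ne_iff.1 hne
  obtain ⟨k₀, hk₀⟩ := Function.ne_iff.1 hq₀
  refine convexComb_sumRate_lt hlam (fun q k => ?_) ⟨q₀, k₀, ?_⟩ <;>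
    simp only [log_sinr hdirect hcross hp, log_sinr hdirect hcross hp',
      log_sinr hdirect hcross hm, hI, hIm]
  · have hlog : α * Real.log (p q k) + β * Real.log (p' q k) ≤
        Real.log ((α • p + β • p') q k) :=
      strictConcaveOn_log_Ioi.concaveOn.2 (hp q k) (hp' q k) hα.le hβ.le hαβ
    linear_combination
      hlog + (Real.log (Gc q q k) - Real.log (interference Gc q k p')) * hαβ
  · have hlog : α * Real.log (p q₀ k₀) + β * Real.log (p' q₀ k₀) <
        Real.log ((α • p + β • p') q₀ k₀) :=
      strictConcaveOn_log_Ioi.2 (hp q₀ k₀) (hp' q₀ k₀) hk₀ hα hβ hαβ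
    linear_combination
      hlog + (Real.log (Gc q₀ q₀ k₀) - Real.log (interference Gc q₀ k₀ p')) * hαβ

theorem eq_of_isMaxOn_sumRate (hdirect : ∀ q k, 0 < Gc q q k)
    (hcross : ∀ r q, r ≠ q → ∀ k, 0 ≤ Gc r q k) (hlam : ∀ q, 0 < lam q)
    {p p' : Fin Q → Fin N → ℝ} (hp : p ∈ profileSet pmax) (hp' : p' ∈ profileSet pmax)
    (hmax : IsMaxOn (sumRate Gc lam) (profileSet pmax) p)
    (hmax' : IsMaxOn (sumRate Gc lam) (profileSet pmax) p') : p = p' := by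
  by_contra hne
  suffices ∃ m ∈ profileSet pmax,
      1 / 2 * sumRate Gc lam p + 1 / 2 * sumRate Gc lam p' < sumRate Gc lam m by
    obtain ⟨m, hm, hlt⟩ := this
    linarith [isMaxOn_iff.1 hmax m hm, isMaxOn_iff.1 hmax' m hm]
  have hhalf : (0 : ℝ) < 1 / 2 := one_half_pos
  by_cases hinterferer : ∃ r q k, r ≠ q ∧ 0 < Gc r q k ∧ p r k ≠ p' r k
  · obtain ⟨x, rfl⟩ := exists_expProfile_eq (pos_of_mem_profileSet hp)
    obtain ⟨y, rfl⟩ := exists_expProfile_eq (pos_of_mem_profileSet hp')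
    obtain ⟨r, q, k, hrq, hG, hxy⟩ := hinterferer
    exact ⟨expProfile ((1 / 2 : ℝ) • x + (1 / 2 : ℝ) • y), fun q _ =>
      convex_setOf_exp_mem_stratSet (pmax q) (hp q trivial) (hp' q trivial) hhalf.le hhalf.le
        (add_halves 1),
      sumRate_expProfile_lt_of_interferer_ne hdirect hcross hlam
        ⟨r, q, k, hrq, hG, fun h => hxy (congrArg Real.exp h)⟩ hhalf hhalf (add_halves 1)⟩
  · push Not at hinterferer
    have hI (q : Fin Q) (k : Fin N) : interference Gc q k p = interference Gc q k p' := by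
      refine congrArg (1 + ·) (Finset.sum_congr rfl fun r hr => ?_)
      have hrq := Finset.ne_of_mem_erase hr
      obtain hG | hG := (hcross r q hrq k).eq_or_lt
      · rw [← hG, zero_mul, zero_mul]
      · rw [hinterferer r q k hrq hG]
    exact ⟨(1 / 2 : ℝ) • p + (1 / 2 : ℝ) • p',
      convex_pi (fun q _ => convex_stratSet (pmax q)) hp hp' hhalf.le hhalf.le (add_halves 1),
      sumRate_lt_of_interference_eq hdirect hcross hlam (pos_of_mem_profileSet hp)
        (pos_of_mem_profileSet hp') hne hI hhalf hhalf (add_halves 1)⟩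

/-- The exponential of the weighted sum rate, as a product of real powers. Unlike the sum rate
itself, it extends continuously to profiles with vanishing powers. -/
noncomputable def sinrProd (Gc : Fin Q → Fin Q → Fin N → ℝ) (lam : Fin Q → ℝ)
    (p : Fin Q → Fin N → ℝ) : ℝ :=
  ∏ i : Fin Q × Fin N, sinr Gc i.1 i.2 p ^ (lam i.1 / N)

theorem exp_sumRate (hdirect : ∀ q k, 0 < Gc q q k) (hcross : ∀ r q, r ≠ q → ∀ k, 0 ≤ Gc r q k)
    (lam : Fin Q → ℝ) {p : Fin Q → Fin N → ℝ} (hp : ∀ q k, 0 < p q k) :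
    Real.exp (sumRate Gc lam p) = sinrProd Gc lam p := by
  rw [sumRate_eq_sum_log_sinr, Real.exp_sum]
  exact Finset.prod_congr rfl fun i _ => by
    rw [Real.rpow_def_of_pos (sinr_pos hdirect hcross hp i.1 i.2), mul_comm]

theorem sinrProd_eq_zero (hlam : ∀ q, 0 < lam q) {p : Fin Q → Fin N → ℝ} {q : Fin Q} {k : Fin N}
    (hqk : p q k = 0) : sinrProd Gc lam p = 0 := by
  have hexponent : lam q / N ≠ 0 := (div_pos (hlam q) (Nat.cast_pos.2 k.pos)).ne'
  refine Finset.prod_eq_zero (Finset.mem_univ (q, k)) ?_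
  rw [sinr, hqk, mul_zero, zero_div, Real.zero_rpow hexponent]

theorem continuousOn_sinrProd (hcross : ∀ r q, r ≠ q → ∀ k, 0 ≤ Gc r q k) (hlam : ∀ q, 0 ≤ lam q) :
    ContinuousOn (sinrProd Gc lam) {p | ∀ q k, 0 ≤ p q k} := by
  refine continuousOn_finsetProd _ fun i _ => ContinuousOn.rpow_const
    (ContinuousOn.div (by fun_prop) (by unfold interference; fun_prop) fun p hp =>
      (interference_pos hcross hp i.1 i.2).ne')
    fun _ _ => Or.inr (div_nonneg (hlam i.1) N.cast_nonneg)

theorem exists_isMaxOn_sumRate (hdirect : ∀ q k, 0 < Gc q q k)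
    (hcross : ∀ r q, r ≠ q → ∀ k, 0 ≤ Gc r q k) (hpmax : ∀ q k, 0 < pmax q k)
    (hlam : ∀ q, 0 < lam q) :
    ∃ p ∈ profileSet pmax, IsMaxOn (sumRate Gc lam) (profileSet pmax) p := by
  let K : Set (Fin Q → Fin N → ℝ) := Set.univ.pi fun q => closedStratSet N (pmax q)
  have hsub : profileSet pmax ⊆ K := Set.pi_mono fun q _ => stratSet_subset_closedStratSet
  obtain ⟨p₀, hp₀⟩ : (profileSet pmax).Nonempty :=
    Set.univ_pi_nonempty_iff.2 fun q => stratSet_nonempty (hpmax q)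
  obtain ⟨p, hpK, hmaxK⟩ := (isCompact_univ_pi fun q => isCompact_closedStratSet).exists_isMaxOn
    ⟨p₀, hsub hp₀⟩ ((continuousOn_sinrProd hcross fun q => (hlam q).le).mono
      fun p (hp : p ∈ K) q k => ((hp q trivial).1 k).1)
  have hprod_pos : 0 < sinrProd Gc lam p := by
    refine lt_of_lt_of_le ?_ (isMaxOn_iff.1 hmaxK p₀ (hsub hp₀))
    rw [← exp_sumRate hdirect hcross lam (pos_of_mem_profileSet hp₀)]
    exact Real.exp_pos _
  have hpos (q : Fin Q) (k : Fin N) : 0 < p q k :=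
    (((hpK q trivial).1 k).1).lt_of_ne' fun hqk => hprod_pos.ne' (sinrProd_eq_zero hlam hqk)
  refine ⟨p, fun q _ => mem_stratSet_of_mem_closedStratSet (hpK q trivial) (hpos q),
    fun p' hp' => Real.exp_le_exp.1 ?_⟩
  rw [exp_sumRate hdirect hcross lam hpos,
    exp_sumRate hdirect hcross lam (pos_of_mem_profileSet hp')]
  exact hmaxK (hsub hp')

theorem mul_modPayoff_eq_sumRate (Gc : Fin Q → Fin Q → Fin N → ℝ) {q : Fin Q} (hq : lam q ≠ 0)
    (p : Fin Q → Fin N → ℝ) : lam q * modPayoff Gc lam q p = sumRate Gc lam p := by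
  rw [modPayoff, sumRate, ← Finset.add_sum_erase _ _ (Finset.mem_univ q), mul_add, ← mul_assoc,
    mul_one_div_cancel hq, one_mul]

theorem isModNE_iff_isMaxOn_update (hlam : ∀ q, 0 < lam q) {p : Fin Q → Fin N → ℝ} :
    isModNE Gc pmax lam p ↔ p ∈ profileSet pmax ∧
      ∀ q, IsMaxOn (fun z => sumRate Gc lam (Function.update p q z)) (stratSet N (pmax q))
        (p q) := by
  have hpotential (q : Fin Q) (p' : Fin Q → Fin N → ℝ) :
      modPayoff Gc lam q p' ≤ modPayoff Gc lam q p ↔ sumRate Gc lam p' ≤ sumRate Gc lam p := by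
    simp only [← mul_modPayoff_eq_sumRate Gc (hlam q).ne', mul_le_mul_iff_right₀ (hlam q)]
  simp only [isModNE, profileSet, Set.mem_univ_pi, isMaxOn_iff, Function.update_eq_self,
    hpotential]

theorem isModNE_iff_isMaxOn (hdirect : ∀ q k, 0 < Gc q q k)
    (hcross : ∀ r q, r ≠ q → ∀ k, 0 ≤ Gc r q k) (hlam : ∀ q, 0 < lam q)
    {p : Fin Q → Fin N → ℝ} :
    isModNE Gc pmax lam p ↔
      p ∈ profileSet pmax ∧ IsMaxOn (sumRate Gc lam) (profileSet pmax) p := by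
  rw [isModNE_iff_isMaxOn_update hlam]
  refine and_congr_right fun hp => ⟨fun hblock => ?_, fun hmax q => isMaxOn_iff.2 fun z hz => ?_⟩
  · obtain ⟨x, rfl⟩ := exists_expProfile_eq (pos_of_mem_profileSet hp)
    let L (q : Fin Q) : Set (Fin N → ℝ) := {z | (fun k => Real.exp (z k)) ∈ stratSet N (pmax q)}
    have hlogmax : IsMaxOn (fun x => sumRate Gc lam (expProfile x)) (Set.univ.pi L) x :=
      isMaxOn_univ_pi_of_isMaxOn_update
        ((concaveOn_sumRate_expProfile hdirect hcross fun q => (hlam q).le).subset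
          (Set.subset_univ _) (convex_pi fun q _ => convex_setOf_exp_mem_stratSet (pmax q)))
        (differentiable_sumRate_expProfile hdirect hcross lam x) hp
        fun q => isMaxOn_iff.2 fun z hz => by
          simpa only [Function.update_eq_self, expProfile_update] using
            isMaxOn_iff.1 (hblock q) _ hz
    intro p' hp'
    obtain ⟨y, rfl⟩ := exists_expProfile_eq (pos_of_mem_profileSet hp')
    exact hlogmax hp'
  · rw [Function.update_eq_self]
    exact hmax ((Set.update_mem_pi_iff_of_mem hp).2 fun _ => hz)

end SumRate

theorem mod_game_unique_NE_general (Q N : ℕ) (Gc : Fin Q → Fin Q → Fin N → ℝ)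
    (hdirect : ∀ q k, 0 < Gc q q k) (hcross : ∀ r q, r ≠ q → ∀ k, 0 ≤ Gc r q k)
    (pmax : Fin Q → Fin N → ℝ≥0∞) (hpmax : ∀ q k, 0 < pmax q k)
    (lam : Fin Q → ℝ) (hlam : ∀ q, 0 < lam q) :
    ∃ p : Fin Q → Fin N → ℝ,
      isModNE Gc pmax lam p ∧
      (∀ p' : Fin Q → Fin N → ℝ, isModNE Gc pmax lam p' → p' = p) ∧
      (∀ p' : Fin Q → Fin N → ℝ, (∀ q, p' q ∈ stratSet N (pmax q)) →
        ∑ q, lam q * rate Gc q p' ≤ ∑ q, lam q * rate Gc q p) ∧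
      (∀ p' : Fin Q → Fin N → ℝ, (∀ q, p' q ∈ stratSet N (pmax q)) →
        (∀ p'' : Fin Q → Fin N → ℝ, (∀ q, p'' q ∈ stratSet N (pmax q)) →
          ∑ q, lam q * rate Gc q p'' ≤ ∑ q, lam q * rate Gc q p') →
        p' = p) := by
  have hNE {p : Fin Q → Fin N → ℝ} : isModNE Gc pmax lam p ↔
      p ∈ profileSet pmax ∧ IsMaxOn (sumRate Gc lam) (profileSet pmax) p :=
    isModNE_iff_isMaxOn hdirect hcross hlam
  obtain ⟨p, hp, hmax⟩ := exists_isMaxOn_sumRate hdirect hcross hpmax hlam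
  have huniq {p' : Fin Q → Fin N → ℝ} (hp' : p' ∈ profileSet pmax)
      (hmax' : IsMaxOn (sumRate Gc lam) (profileSet pmax) p') : p' = p :=
    eq_of_isMaxOn_sumRate hdirect hcross hlam hp' hp hmax' hmax
  exact ⟨p, hNE.2 ⟨hp, hmax⟩, fun p' hp' => huniq (hNE.1 hp').1 (hNE.1 hp').2,
    fun p' hp' => hmax fun q _ => hp' q,
    fun p' hp' hmax' => huniq (fun q _ => hp' q) fun p'' hp'' => hmax' p'' fun q => hp'' q trivial⟩

end HighSinr

/-- **Proposition 4 (second part).** Under the low-interference/high-SNR rate model, for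
every vector of positive weights `λ`, the modified game `G̃(λ)` admits exactly one Nash
equilibrium, and this equilibrium is the unique global maximizer of `Σ_q λ_q R_q` over
`P_1°×…×P_Q°`. -/
theorem HighSinr.mod_game_unique_NE (Q N : ℕ) (hQ : 1 ≤ Q) (hN : 1 ≤ N)
    (Gc : Fin Q → Fin Q → Fin N → ℝ) (hGc : ∀ r q k, 0 < Gc r q k)
    (pmax : Fin Q → Fin N → ℝ≥0∞) (hpmax : ∀ q k, 0 < pmax q k)
    (lam : Fin Q → ℝ) (hlam : ∀ q, 0 < lam q) :
    ∃ p : Fin Q → Fin N → ℝ,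
      HighSinr.isModNE Gc pmax lam p ∧
      (∀ p' : Fin Q → Fin N → ℝ, HighSinr.isModNE Gc pmax lam p' → p' = p) ∧
      (∀ p' : Fin Q → Fin N → ℝ, (∀ q, p' q ∈ HighSinr.stratSet N (pmax q)) →
        ∑ q, lam q * HighSinr.rate Gc q p' ≤ ∑ q, lam q * HighSinr.rate Gc q p) ∧
      (∀ p' : Fin Q → Fin N → ℝ, (∀ q, p' q ∈ HighSinr.stratSet N (pmax q)) →
        (∀ p'' : Fin Q → Fin N → ℝ, (∀ q, p'' q ∈ HighSinr.stratSet N (pmax q)) →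
          ∑ q, lam q * HighSinr.rate Gc q p'' ≤ ∑ q, lam q * HighSinr.rate Gc q p') →
        p' = p) := by
  exact HighSinr.mod_game_unique_NE_general Q N Gc (fun q => hGc q q)
    (fun r q _ k => (hGc r q k).le) pmax hpmax lam hlam
end

section
/- Assume (1/N)·Σ_{k=1}^N p_q^max(k) > 1 for every q. If p* is a Nash equilibrium of game G, then for every user q there exists a water level μ_q ∈ ℝ such that for every carrier k, p*_q(k) = [ μ_q − Γ_q·(1 + Σ_{r≠q} |H_rq(k)|²·p*_r(k)) / |H_qq(k)|² ]_0^{p_q^max(k)}, and the power constraint is active: (1/N)·Σ_{k=1}^N p*_q(k) = 1. (The simultaneous-waterfilling characterization of Nash equilibria of game G.) -/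
/-!
Fix a user `q` and let `c k` be `Γ_q / |H_qq(k)|²` times the interference-plus-noise on carrier `k`.
Up to the factor `1 / N` the payoff of an allocation `x` is `∑ k, log (1 + x k / c k)`, and two
exchange arguments on a maximizer `x` replace the KKT conditions.

* Raising the power of an unsaturated carrier increases the sum, so a slack budget forces every
  carrier to its mask.
* Since `log (1 + x k / c k) = log (x k + c k) - log (c k)`, moving a little power from a carrier
  `i` in use to an unsaturated carrier `j` increases the sum when `x j + c j < x i + c i`. Hence the
  levels `x k + c k` of the carriers in use lie below those of the unsaturated carriers.

Any number separating these two finite sets of levels is a water level.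
-/

open scoped ENNReal

namespace NCGame

/-- The data of game `G`: `Q` users, `N` carriers, channel gains `chan r q k` (from source `r`
to destination `q` on carrier `k`), gap parameters `gap q ≥ 1`, and spectral-mask limits
`pmax q k ∈ (0, ∞]`. -/
structure GameData (Q N : ℕ) where
  chan : Fin Q → Fin Q → Fin N → ℂ
  gap : Fin Q → ℝ
  pmax : Fin Q → Fin N → ℝ≥0∞
  chan_diag_ne : ∀ q k, chan q q k ≠ 0
  one_le_gap : ∀ q, 1 ≤ gap q
  pmax_pos : ∀ q k, 0 < pmax q k

namespace GameData

variable {Q N : ℕ}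

/-- The strategy set `P_q` of user `q`: powers within the spectral mask whose average
does not exceed the power budget. -/
def stratSet (G : GameData Q N) (q : Fin Q) : Set (Fin N → ℝ) :=
  { p | (∀ k, 0 ≤ p k ∧ ENNReal.ofReal (p k) ≤ G.pmax q k) ∧
        (1 / (N : ℝ)) * ∑ k, p k ≤ 1 }

/-- Interference-plus-noise `1 + Σ_{r ≠ q} |H_rq(k)|² p_r(k)` seen by user `q` on carrier `k`. -/
noncomputable def interf (G : GameData Q N) (q : Fin Q) (p : Fin Q → Fin N → ℝ)
    (k : Fin N) : ℝ :=
  1 + ∑ r ∈ Finset.univ.erase q, ‖G.chan r q k‖ ^ 2 * p r k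

/-- The payoff `R_q(p)` of user `q` at the strategy profile `p`. -/
noncomputable def payoff (G : GameData Q N) (q : Fin Q) (p : Fin Q → Fin N → ℝ) : ℝ :=
  (1 / (N : ℝ)) * ∑ k, Real.log (1 +
    (1 / G.gap q) * (‖G.chan q q k‖ ^ 2 * p q k) / G.interf q p k)

/-- `p` is a Nash equilibrium of game `G`. -/
def isNE (G : GameData Q N) (p : Fin Q → Fin N → ℝ) : Prop :=
  (∀ q, p q ∈ G.stratSet q) ∧
  ∀ q, ∀ pq ∈ G.stratSet q, G.payoff q (Function.update p q pq) ≤ G.payoff q p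

end GameData

end NCGame

namespace NCGame

/-- Euclidean projection of `x` onto the interval `[0, b]`, where `b ∈ (0, ∞]`. -/
noncomputable def proj (x : ℝ) (b : ℝ≥0∞) : ℝ :=
  if b = ⊤ then max 0 x else min b.toReal (max 0 x)

namespace GameData

variable {Q N : ℕ}

/-- `p` is an admissible strategy profile of the users other than `q` (the `q`-th component
is irrelevant). -/
def otherStrats (G : GameData Q N) (q : Fin Q) (p : Fin Q → Fin N → ℝ) : Prop :=
  ∀ r, r ≠ q → p r ∈ G.stratSet r

/-- `wf` is the waterfilling response `WF_q(p_{-q})` of user `q` to the strategies `p` of the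
other users: there is a water level `μ` such that each component is the projection of
`μ − Γ_q (1 + Σ_{r≠q}|H_rq(k)|² p_r(k))/|H_qq(k)|²` onto `[0, p_q^max(k)]`, and the average
power equals `1`. -/
def isWFResp (G : GameData Q N) (q : Fin Q) (p : Fin Q → Fin N → ℝ)
    (wf : Fin N → ℝ) : Prop :=
  (∃ μ : ℝ, ∀ k, wf k =
      proj (μ - G.gap q * G.interf q p k / ‖G.chan q q k‖ ^ 2) (G.pmax q k)) ∧
  (1 / (N : ℝ)) * ∑ k, wf k = 1

/-- The set `D_q` of carriers that user `q` can possibly use in a waterfilling best response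
to some admissible strategy of the other users. -/
def Dset (G : GameData Q N) (q : Fin Q) : Set (Fin N) :=
  { k | ∃ p wf, G.otherStrats q p ∧ G.isWFResp q p wf ∧ wf k ≠ 0 }

open Classical in
/-- The matrix `H(k)` of normalized cross-channel gains. -/
noncomputable def Hmat (G : GameData Q N) (k : Fin N) : Matrix (Fin Q) (Fin Q) ℝ :=
  fun q r =>
    if r ≠ q ∧ k ∈ G.Dset q ∧ k ∈ G.Dset r then
      G.gap q * ‖G.chan r q k‖ ^ 2 / ‖G.chan q q k‖ ^ 2
    else 0

end GameData

/-- Spectral radius of a real square matrix: the largest modulus of its (complex) spectrum. -/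
noncomputable def specRad {Q : ℕ} (M : Matrix (Fin Q) (Fin Q) ℝ) : ℝ :=
  sSup ((fun z => ‖z‖) '' spectrum ℂ (M.map (Complex.ofReal ·)))

end NCGame

namespace NCGame

open Filter Function Topology

section Projection

lemma proj_ofReal {a : ℝ} (ha : 0 ≤ a) (x : ℝ) : proj x (ENNReal.ofReal a) = min a (max 0 x) := by
  rw [proj, if_neg ENNReal.ofReal_ne_top, ENNReal.toReal_ofReal ha]

lemma proj_eq_max_of_ofReal_le {x : ℝ} {b : ℝ≥0∞} (h : ENNReal.ofReal x ≤ b) :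
    proj x b = max 0 x := by
  unfold proj
  split_ifs with hb
  · rfl
  · exact min_eq_right (max_le ENNReal.toReal_nonneg ((ENNReal.ofReal_le_iff_le_toReal hb).1 h))

lemma eq_proj_of_le_of_ge {a x : ℝ} {b : ℝ≥0∞} (ha : 0 ≤ a) (hab : ENNReal.ofReal a ≤ b)
    (hle : 0 < a → a ≤ x) (hge : ENNReal.ofReal a < b → x ≤ a) : a = proj x b := by
  have hmax : a ≤ max 0 x := by
    rcases ha.eq_or_lt with rfl | hpos
    · exact le_max_left 0 x
    · exact le_max_of_le_right (hle hpos)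
  rcases hab.eq_or_lt with rfl | hlt
  · rw [proj_ofReal ha, min_eq_left hmax]
  · have hxa : x ≤ a := hge hlt
    rw [proj_eq_max_of_ofReal_le ((ENNReal.ofReal_le_ofReal hxa).trans hab)]
    exact le_antisymm hmax (max_le ha hxa)

end Projection

lemma nonempty_upperBounds_inter_lowerBounds {α : Type*} [LinearOrder α] [Nonempty α]
    {s t : Set α} (hs : s.Finite) (ht : t.Finite) (h : ∀ a ∈ s, ∀ b ∈ t, a ≤ b) :
    (upperBounds s ∩ lowerBounds t).Nonempty := by
  rcases s.eq_empty_or_nonempty with rfl | hne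
  · rw [upperBounds_empty, Set.univ_inter]
    exact ht.bddBelow
  · obtain ⟨a, ha, hmax⟩ := s.exists_max_image id hs hne
    exact ⟨a, hmax, h a ha⟩

lemma sum_apply_update {ι α M : Type*} [Fintype ι] [DecidableEq ι] [AddCommGroup M]
    (g : ι → α → M) (x : ι → α) (i : ι) (v : α) :
    ∑ k, g k (update x i v k) = ∑ k, g k (x k) + (g i v - g i (x i)) := by
  rw [← sub_eq_iff_eq_add', ← Finset.sum_sub_distrib,
    Fintype.sum_eq_single i fun k hk => by rw [update_of_ne hk, sub_self], update_self]

lemma log_add_log_lt_log_sub_add_log_add {u v ε : ℝ} (hv : 0 < v) (hε : 0 < ε)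
    (h : v < u - ε) : Real.log u + Real.log v < Real.log (u - ε) + Real.log (v + ε) := by
  have hu : 0 < u := by linarith
  rw [← Real.log_mul hu.ne' hv.ne', ← Real.log_mul (hv.trans h).ne' (by linarith)]
  refine Real.log_lt_log (mul_pos hu hv) ?_
  calc
    u * v < u * v + ε * (u - ε - v) := lt_add_of_pos_right _ (mul_pos hε (sub_pos.2 h))
    _ = (u - ε) * (v + ε) := by ring

lemma eventually_ofReal_add_lt {a : ℝ} {b : ℝ≥0∞} (h : ENNReal.ofReal a < b) :
    ∀ᶠ ε in 𝓝[>] (0 : ℝ), ENNReal.ofReal (a + ε) < b := by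
  have hcont : Continuous fun ε : ℝ => ENNReal.ofReal (a + ε) :=
    ENNReal.continuous_ofReal.comp (continuous_const_add a)
  exact nhdsWithin_le_nhds (hcont.tendsto' 0 _ (by rw [add_zero]) |>.eventually_lt_const h)

section SingleUser

variable {ι : Type*} [Fintype ι]

/-- The power allocations of a single user on the carriers `ι`, with spectral masks `b` and total
power at most `P`. The strategy set of user `q` is the case `b = p_q^max`, `P = N`. -/
def feasibleSet (b : ι → ℝ≥0∞) (P : ℝ) : Set (ι → ℝ) :=
  {x | (∀ k, 0 ≤ x k ∧ ENNReal.ofReal (x k) ≤ b k) ∧ ∑ k, x k ≤ P}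

/-- The total rate of the allocation `x` over parallel channels with normalized noise powers `c`;
the payoff is this sum divided by the number of carriers. -/
noncomputable def rate (c x : ι → ℝ) : ℝ :=
  ∑ k, Real.log (1 + x k / c k)

variable {b : ι → ℝ≥0∞} {P : ℝ} {c x : ι → ℝ}

lemma update_mem_feasibleSet [DecidableEq ι] (hx : x ∈ feasibleSet b P) {i : ι} {v : ℝ}
    (hv : 0 ≤ v) (hvb : ENNReal.ofReal v ≤ b i) :
    update x i v ∈ feasibleSet b (P + (v - x i)) := by
  refine ⟨(forall_update_iff x fun k a => 0 ≤ a ∧ ENNReal.ofReal a ≤ b k).2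
    ⟨⟨hv, hvb⟩, fun k _ => hx.1 k⟩, ?_⟩
  rw [sum_apply_update fun _ a => a]
  exact add_le_add_left hx.2 _

lemma rate_update [DecidableEq ι] {i : ι} {v : ℝ} (hc : 0 < c i) (hx : 0 ≤ x i) (hv : 0 ≤ v) :
    rate c (update x i v) = rate c x + (Real.log (v + c i) - Real.log (x i + c i)) := by
  have hlog {a : ℝ} (ha : 0 ≤ a) :
      Real.log (1 + a / c i) = Real.log (a + c i) - Real.log (c i) := by
    rw [one_add_div hc.ne', add_comm, Real.log_div (by positivity) hc.ne']
  unfold rate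
  rw [sum_apply_update fun k a => Real.log (1 + a / c k), hlog hv, hlog hx,
    sub_sub_sub_cancel_right]

lemma ofReal_eq_of_isMaxOn_of_sum_lt (hx : x ∈ feasibleSet b P)
    (hmax : IsMaxOn (rate c) (feasibleSet b P) x) {k : ι} (hc : 0 < c k)
    (hslack : ∑ l, x l < P) : ENNReal.ofReal (x k) = b k := by
  classical
  refine (hx.1 k).2.eq_of_not_lt fun hk => ?_
  obtain ⟨ε, hεb, hε : 0 < ε, hεP⟩ := ((eventually_ofReal_add_lt hk).and
    (Ioc_mem_nhdsGT (sub_pos.2 hslack))).exists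
  have hxk : 0 ≤ x k := (hx.1 k).1
  have hv : 0 ≤ x k + ε := by positivity
  have hmem : update x k (x k + ε) ∈ feasibleSet b P := by
    obtain ⟨hmask, hsum⟩ := update_mem_feasibleSet ⟨hx.1, le_rfl⟩ hv hεb.le
    exact ⟨hmask, hsum.trans (by linarith)⟩
  have hrate : rate c (update x k (x k + ε)) ≤ rate c x := hmax hmem
  rw [rate_update hc hxk hv] at hrate
  have hgain : Real.log (x k + c k) < Real.log (x k + ε + c k) :=
    Real.log_lt_log (by positivity) (by linarith)
  linarith

lemma ofReal_sum_eq_min_of_isMaxOn (hc : ∀ k, 0 < c k) (hx : x ∈ feasibleSet b P)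
    (hmax : IsMaxOn (rate c) (feasibleSet b P) x) :
    ENNReal.ofReal (∑ k, x k) = min (ENNReal.ofReal P) (∑ k, b k) := by
  have hsum : ENNReal.ofReal (∑ k, x k) = ∑ k, ENNReal.ofReal (x k) :=
    ENNReal.ofReal_sum_of_nonneg fun k _ => (hx.1 k).1
  have hmask : ENNReal.ofReal (∑ k, x k) ≤ ∑ k, b k :=
    hsum.trans_le (Finset.sum_le_sum fun k _ => (hx.1 k).2)
  rcases hx.2.eq_or_lt with hactive | hslack
  · rw [← hactive, min_eq_left hmask]
  · have hsat : ENNReal.ofReal (∑ k, x k) = ∑ k, b k := hsum.trans <|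
      Finset.sum_congr rfl fun k _ => ofReal_eq_of_isMaxOn_of_sum_lt hx hmax (hc k) hslack
    rw [← hsat, min_eq_right (ENNReal.ofReal_le_ofReal hx.2)]

lemma add_le_add_of_isMaxOn (hx : x ∈ feasibleSet b P)
    (hmax : IsMaxOn (rate c) (feasibleSet b P) x) {i j : ι} (hci : 0 < c i) (hcj : 0 < c j)
    (hi : 0 < x i) (hj : ENNReal.ofReal (x j) < b j) : x i + c i ≤ x j + c j := by
  classical
  by_contra! hlt
  have hji : j ≠ i := by
    rintro rfl
    exact hlt.false
  obtain ⟨ε, hεb, ⟨hε, hεi⟩, -, hεlt⟩ := ((eventually_ofReal_add_lt hj).and <|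
    inter_mem (Ioc_mem_nhdsGT hi) (Ioo_mem_nhdsGT (sub_pos.2 hlt))).exists
  have hxj : 0 ≤ x j := (hx.1 j).1
  have hvi : 0 ≤ x i - ε := sub_nonneg.2 hεi
  have hvj : 0 ≤ x j + ε := by positivity
  set x' := update x i (x i - ε)
  have hx'j : x' j = x j := update_of_ne hji _ _
  have hmem : update x' j (x j + ε) ∈ feasibleSet b P := by
    have hmem' : x' ∈ feasibleSet b (P + (x i - ε - x i)) := update_mem_feasibleSet hx hvi <|
      (ENNReal.ofReal_le_ofReal (sub_le_self _ hε.le)).trans (hx.1 i).2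
    convert update_mem_feasibleSet hmem' hvj hεb.le using 2
    rw [hx'j]
    ring
  have hrate : rate c (update x' j (x j + ε)) ≤ rate c x := hmax hmem
  rw [rate_update hcj (hxj.trans_eq hx'j.symm) hvj, rate_update hci hi.le hvi, hx'j,
    add_right_comm (x j), sub_add_eq_add_sub] at hrate
  have hgain : Real.log (x i + c i) + Real.log (x j + c j) <
      Real.log (x i + c i - ε) + Real.log (x j + c j + ε) :=
    log_add_log_lt_log_sub_add_log_add (add_pos_of_nonneg_of_pos hxj hcj) hε (lt_sub_comm.1 hεlt)
  linarith

lemma exists_waterLevel_of_isMaxOn (hc : ∀ k, 0 < c k) (hx : x ∈ feasibleSet b P)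
    (hmax : IsMaxOn (rate c) (feasibleSet b P) x) :
    ∃ μ : ℝ, ∀ k, x k = proj (μ - c k) (b k) := by
  let used : Set ι := {k | 0 < x k}
  let unsaturated : Set ι := {k | ENNReal.ofReal (x k) < b k}
  have hlevels : ∀ u ∈ (x + c) '' used, ∀ v ∈ (x + c) '' unsaturated, u ≤ v := by
    rintro _ ⟨i, hi, rfl⟩ _ ⟨j, hj, rfl⟩
    exact add_le_add_of_isMaxOn hx hmax (hc i) (hc j) hi hj
  obtain ⟨μ, hused, hunsat⟩ := nonempty_upperBounds_inter_lowerBounds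
    (used.toFinite.image _) (unsaturated.toFinite.image _) hlevels
  refine ⟨μ, fun k => eq_proj_of_le_of_ge (hx.1 k).1 (hx.1 k).2 (fun hk => ?_) fun hk => ?_⟩
  · exact le_sub_iff_add_le.2 (hused ⟨k, hk, rfl⟩)
  · exact sub_le_iff_le_add.2 (hunsat ⟨k, hk, rfl⟩)

end SingleUser

namespace GameData

variable {Q N : ℕ} {G : GameData Q N} {q : Fin Q} {p : Fin Q → Fin N → ℝ}

lemma stratSet_eq_feasibleSet (hN : 1 ≤ N) (G : GameData Q N) (q : Fin Q) :
    G.stratSet q = feasibleSet (G.pmax q) N := by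
  have hN' : (0 : ℝ) < N := by exact_mod_cast hN
  ext y
  simp only [stratSet, feasibleSet, Set.mem_ofPred_eq, one_div_mul_eq_div, div_le_one hN']

lemma interf_update (G : GameData Q N) (q : Fin Q) (p : Fin Q → Fin N → ℝ) (y : Fin N → ℝ) :
    G.interf q (update p q y) = G.interf q p := by
  funext k
  unfold interf
  congr 1
  refine Finset.sum_congr rfl fun r hr => ?_
  rw [update_of_ne (Finset.ne_of_mem_erase hr)]

lemma interf_pos (hp : G.otherStrats q p) (k : Fin N) : 0 < G.interf q p k :=
  add_pos_of_pos_of_nonneg one_pos <| Finset.sum_nonneg fun r hr =>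
    mul_nonneg (sq_nonneg _) ((hp r (Finset.ne_of_mem_erase hr)).1 k).1

/-- The interference-plus-noise seen by user `q` on carrier `k`, normalized by the direct gain and
the gap: user `q` faces parallel channels with these noise powers and unit gains. -/
noncomputable def normInterf (G : GameData Q N) (q : Fin Q) (p : Fin Q → Fin N → ℝ)
    (k : Fin N) : ℝ :=
  G.gap q * G.interf q p k / ‖G.chan q q k‖ ^ 2

lemma normInterf_pos (hp : G.otherStrats q p) (k : Fin N) : 0 < G.normInterf q p k := by
  have hgap : 0 < G.gap q := one_pos.trans_le (G.one_le_gap q)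
  have hchan : 0 < ‖G.chan q q k‖ := norm_pos_iff.2 (G.chan_diag_ne q k)
  exact div_pos (mul_pos hgap (interf_pos hp k)) (pow_pos hchan 2)

lemma payoff_update (G : GameData Q N) (q : Fin Q) (p : Fin Q → Fin N → ℝ) (y : Fin N → ℝ) :
    G.payoff q (update p q y) = 1 / (N : ℝ) * rate (G.normInterf q p) y := by
  unfold payoff rate normInterf
  rw [interf_update, update_self]
  congr! 4 with k
  rw [div_div_eq_mul_div, one_div_mul_eq_div, div_div, mul_comm (y k)]

lemma isMaxOn_rate_of_isMaxOn_payoff (hN : 1 ≤ N) {y : Fin N → ℝ}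
    (hmax : IsMaxOn (fun z => G.payoff q (update p q z)) (G.stratSet q) y) :
    IsMaxOn (rate (G.normInterf q p)) (feasibleSet (G.pmax q) N) y := by
  have hN' : (0 : ℝ) < 1 / N := one_div_pos.2 (by exact_mod_cast hN)
  intro z hz
  have hle : G.payoff q (update p q z) ≤ G.payoff q (update p q y) :=
    hmax (stratSet_eq_feasibleSet hN G q ▸ hz)
  rw [payoff_update, payoff_update] at hle
  exact le_of_mul_le_mul_left hle hN'

lemma isNE.otherStrats (h : G.isNE p) (q : Fin Q) : G.otherStrats q p :=
  fun r _ => h.1 r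

lemma isNE.isMaxOn_payoff (h : G.isNE p) (q : Fin Q) :
    IsMaxOn (fun y => G.payoff q (update p q y)) (G.stratSet q) (p q) := by
  intro y hy
  simpa only [Set.mem_ofPred_eq, update_eq_self] using h.2 q y hy

end GameData

theorem NE_is_waterfilling_general {Q N : ℕ} (hN : 1 ≤ N) (G : GameData Q N) (q : Fin Q)
    {p : Fin Q → Fin N → ℝ} (hp : G.otherStrats q p) {y : Fin N → ℝ} (hy : y ∈ G.stratSet q)
    (hmax : IsMaxOn (fun z => G.payoff q (update p q z)) (G.stratSet q) y) :
    ∃ μ : ℝ,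
      (∀ k, y k = proj (μ - G.gap q * G.interf q p k / ‖G.chan q q k‖ ^ 2) (G.pmax q k)) ∧
      ENNReal.ofReal (1 / (N : ℝ) * ∑ k, y k) = min 1 (1 / (N : ℝ≥0∞) * ∑ k, G.pmax q k) := by
  have hN' : (0 : ℝ) < N := by exact_mod_cast hN
  have hmem : y ∈ feasibleSet (G.pmax q) N := GameData.stratSet_eq_feasibleSet hN G q ▸ hy
  have hrate := GameData.isMaxOn_rate_of_isMaxOn_payoff hN hmax
  obtain ⟨μ, hμ⟩ := exists_waterLevel_of_isMaxOn (GameData.normInterf_pos hp) hmem hrate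
  refine ⟨μ, hμ, ?_⟩
  rw [ENNReal.ofReal_mul (by positivity),
    ofReal_sum_eq_min_of_isMaxOn (GameData.normInterf_pos hp) hmem hrate, mul_min,
    ENNReal.ofReal_div_of_pos hN', ENNReal.ofReal_one, ENNReal.ofReal_natCast,
    ENNReal.div_mul_cancel (by exact_mod_cast hN'.ne') (ENNReal.natCast_ne_top N)]

end NCGame

/-- **Simultaneous-waterfilling characterization of Nash equilibria of game `G`.**
Assume `(1/N)·Σ_k p_q^max(k) > 1` for every `q`. If `p*` is a Nash equilibrium of `G`, then
for every user `q` there is a water level `μ_q` such that every component of `p*_q` is the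
projection of `μ_q − Γ_q (1 + Σ_{r≠q}|H_rq(k)|² p*_r(k))/|H_qq(k)|²` onto `[0, p_q^max(k)]`,
and the power constraint is active. -/
theorem NCGame.NE_is_waterfilling (Q N : ℕ) (hQ : 1 ≤ Q) (hN : 1 ≤ N)
    (G : NCGame.GameData Q N)
    (hbudget : ∀ q, (1 : ℝ≥0∞) < (1 / (N : ℝ≥0∞)) * ∑ k, G.pmax q k)
    (p : Fin Q → Fin N → ℝ) (hNE : G.isNE p) :
    ∀ q : Fin Q, ∃ μ : ℝ,
      (∀ k : Fin N, p q k =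
        NCGame.proj (μ - G.gap q * G.interf q p k / ‖G.chan q q k‖ ^ 2) (G.pmax q k)) ∧
      (1 / (N : ℝ)) * ∑ k, p q k = 1 := by
  intro q
  obtain ⟨μ, hμ, hpower⟩ := NCGame.NE_is_waterfilling_general hN G q (hNE.otherStrats q)
    (hNE.1 q) (hNE.isMaxOn_payoff q)
  exact ⟨μ, hμ, by rwa [min_eq_left (hbudget q).le, ENNReal.ofReal_eq_one] at hpower⟩
end
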